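/- Let S be a numerical semigroup with multiplicity four. Then (𝔑(S), ⪯) is a lattice: every pair of normalized ideals of S has a supremum and an infimum with respect to ⪯. -/

import Mathlib

open Pointwise

/-- A numerical semigroup: an additive submonoid of `ℕ` with finite complement. -/
def IsNumericalSemigroup (S : Set ℕ) : Prop :=
  0 ∈ S ∧ (∀ a ∈ S, ∀ b ∈ S, a + b ∈ S) ∧ Sᶜ.Finite

/-- A normalized (relative) ideal of `S`: a subset of `ℕ` with `min I = 0`
(equivalently `0 ∈ I`) satisfying `I + S ⊆ I`. -/
def IsNormalizedIdeal (S I : Set ℕ) : Prop :=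
  0 ∈ I ∧ ∀ i ∈ I, ∀ s ∈ S, i + s ∈ I

/-- The set `𝔑(S)` of normalized ideals of `S`. -/
def NI (S : Set ℕ) : Set (Set ℕ) := {I : Set ℕ | IsNormalizedIdeal S I}

/-- The multiplicity of `S`: its least nonzero element. -/
noncomputable def multNS (S : Set ℕ) : ℕ := sInf {n : ℕ | n ∈ S ∧ n ≠ 0}

/-- The Frobenius number of `S` (or of an ideal): the largest natural number not in `S`. -/
noncomputable def frobNS (S : Set ℕ) : ℕ := sSup Sᶜ

/-- A minimal generator of `S`: a nonzero element of `S` that is not the sum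
of two nonzero elements of `S`. -/
def IsMinimalGenerator (S : Set ℕ) (a : ℕ) : Prop :=
  a ∈ S ∧ a ≠ 0 ∧ ¬ ∃ b ∈ S, ∃ c ∈ S, b ≠ 0 ∧ c ≠ 0 ∧ a = b + c

/-- A minimal generator of an ideal `I` of a numerical semigroup `T`:
an element `x ∈ I` with `x ≠ y + t` for every `y ∈ I` and nonzero `t ∈ T`. -/
def IsMinGenOfIdeal (T I : Set ℕ) (x : ℕ) : Prop :=
  x ∈ I ∧ ∀ y ∈ I, ∀ t ∈ T, t ≠ 0 → x ≠ y + t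

/-- The order `⪯` on normalized ideals: `I ⪯ J` iff `I + K = J` for some `K ∈ 𝔑(S)`. -/
def Preceq (S I J : Set ℕ) : Prop :=
  ∃ K : Set ℕ, IsNormalizedIdeal S K ∧ I + K = J

/-- `M` is the supremum of `{I, J}` in `(𝔑(S), ⪯)`. -/
def IsSupNI (S I J M : Set ℕ) : Prop :=
  IsNormalizedIdeal S M ∧ Preceq S I M ∧ Preceq S J M ∧
    ∀ L : Set ℕ, IsNormalizedIdeal S L → Preceq S I L → Preceq S J L → Preceq S M L

/-- `M` is the infimum of `{I, J}` in `(𝔑(S), ⪯)`. -/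
def IsInfNI (S I J M : Set ℕ) : Prop :=
  IsNormalizedIdeal S M ∧ Preceq S M I ∧ Preceq S M J ∧
    ∀ L : Set ℕ, IsNormalizedIdeal S L → Preceq S L I → Preceq S L J → Preceq S L M

/-- `(𝔑(S), ⪯)` is a lattice: every pair of normalized ideals has a supremum
and an infimum with respect to `⪯`. -/
def NILattice (S : Set ℕ) : Prop :=
  ∀ I J : Set ℕ, IsNormalizedIdeal S I → IsNormalizedIdeal S J →
    (∃ M : Set ℕ, IsSupNI S I J M) ∧ (∃ M : Set ℕ, IsInfNI S I J M)

/-- The ordinary numerical semigroup `H_m = {0} ∪ {n : n ≥ m}`. -/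
def ordinaryNS (m : ℕ) : Set ℕ := {0} ∪ {n : ℕ | m ≤ n}

/-- `I ∈ 𝔑(S) \ {S}` is `+`-irreducible if `I = J + K` with `J, K ∈ 𝔑(S)`
implies `I = J` or `I = K`. -/
def PlusIrreducible (S I : Set ℕ) : Prop :=
  IsNormalizedIdeal S I ∧ I ≠ S ∧
    ∀ J K : Set ℕ, IsNormalizedIdeal S J → IsNormalizedIdeal S K → I = J + K → I = J ∨ I = K

/-!
A normalized ideal of a semigroup containing `4` is determined by its least elements in the residue
classes of `1`, `2`, `3` modulo `4`, and in these coordinates `I ⪯ J` becomes a system of linear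
inequalities that does not mention the semigroup. Outside a few exceptional configurations the sum
`I + J` is the supremum of `I` and `J`; in the exceptional ones the supremum is given by an explicit
formula. Since `𝔑(S)` is finite with least element `S`, infima exist as soon as suprema do.
-/

section NormalizedIdeal

variable {S I J K : Set ℕ}

theorem IsNumericalSemigroup.isNormalizedIdeal (hS : IsNumericalSemigroup S) :
    IsNormalizedIdeal S S :=
  ⟨hS.1, hS.2.1⟩

theorem multNS_mem (h : multNS S ≠ 0) : multNS S ∈ S :=
  (Nat.sInf_mem (Nat.nonempty_of_sInf_eq_succ (Nat.succ_pred_eq_of_ne_zero h).symm)).1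

theorem IsNormalizedIdeal.subset (hI : IsNormalizedIdeal S I) : S ⊆ I := fun s hs => by
  simpa using hI.2 0 hI.1 s hs

theorem IsNormalizedIdeal.add_eq (hI : IsNormalizedIdeal S I) (h0 : 0 ∈ S) : I + S = I :=
  (Set.add_subset_iff.2 hI.2).antisymm (Set.subset_add_left I h0)

theorem IsNormalizedIdeal.add (hI : IsNormalizedIdeal S I) (hK : 0 ∈ K) :
    IsNormalizedIdeal S (I + K) := by
  refine ⟨⟨0, hI.1, 0, hK, rfl⟩, ?_⟩
  rintro _ ⟨i, hi, k, hk, rfl⟩ s hs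
  exact ⟨i + s, hI.2 i hi s hs, k, hk, add_right_comm i s k⟩

theorem finite_NI (hS : Sᶜ.Finite) : (NI S).Finite := by
  refine (hS.finite_subsets.preimage compl_injective.injOn).subset fun I hI => ?_
  exact Set.compl_subset_compl.2 (IsNormalizedIdeal.subset hI)

theorem Preceq.subset (h : Preceq S I J) : I ⊆ J := by
  obtain ⟨K, hK, rfl⟩ := h
  exact Set.subset_add_left I hK.1

theorem Preceq.isNormalizedIdeal (h : Preceq S I J) (hI : IsNormalizedIdeal S I) :
    IsNormalizedIdeal S J := by
  obtain ⟨K, hK, rfl⟩ := h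
  exact hI.add hK.1

theorem preceq_iff_exists_zero_mem (hS : IsNumericalSemigroup S) (hI : IsNormalizedIdeal S I) :
    Preceq S I J ↔ ∃ K : Set ℕ, 0 ∈ K ∧ I + K = J := by
  constructor
  · rintro ⟨K, hK, hJ⟩
    exact ⟨K, hK.1, hJ⟩
  · rintro ⟨K, hK, hJ⟩
    exact ⟨S + K, hS.isNormalizedIdeal.add hK, by rw [← add_assoc, hI.add_eq hS.1, hJ]⟩

theorem preceq_of_isNormalizedIdeal (hS : IsNumericalSemigroup S) (hI : IsNormalizedIdeal S I) :
    Preceq S S I :=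
  ⟨I, hI, by rw [add_comm, hI.add_eq hS.1]⟩

theorem exists_isInfNI (hS : IsNumericalSemigroup S)
    (hsup : ∀ I ∈ NI S, ∀ J ∈ NI S, ∃ M, IsSupNI S I J M)
    (hI : IsNormalizedIdeal S I) (hJ : IsNormalizedIdeal S J) : ∃ M, IsInfNI S I J M := by
  let lowerBounds : Set (Set ℕ) := {L | L ∈ NI S ∧ Preceq S L I ∧ Preceq S L J}
  have hfinite : lowerBounds.Finite := (finite_NI hS.2.2).subset fun L hL => hL.1
  have hnonempty : lowerBounds.Nonempty :=
    ⟨S, hS.isNormalizedIdeal, preceq_of_isNormalizedIdeal hS hI, preceq_of_isNormalizedIdeal hS hJ⟩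
  obtain ⟨M, ⟨hM, hMI, hMJ⟩, hmax⟩ := hfinite.exists_maximal hnonempty
  refine ⟨M, hM, hMI, hMJ, fun L hL hLI hLJ => ?_⟩
  obtain ⟨N, hN, hLN, hMN, hleast⟩ := hsup L hL M hM
  have hNlower : N ∈ lowerBounds := ⟨hN, hleast I hI hLI hMI, hleast J hJ hLJ hMJ⟩
  have hNM : N = M := (hmax hNlower hMN.subset).antisymm hMN.subset
  exact hNM ▸ hLN

end NormalizedIdeal

section AperySet

variable {m : ℕ}

/-- `w` selects one natural number in each residue class modulo `m`, with `0` selected in the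
class of `0`: this is the shape of the map sending a residue class to its least element in a
set `I` with `0 ∈ I` and `I + m ⊆ I` (the Apéry set of `I` with respect to `m`). -/
structure IsAperyFun (w : ZMod m → ℕ) : Prop where
  map_zero : w 0 = 0
  natCast_apply (r : ZMod m) : (w r : ZMod m) = r

/-- The set whose least element in each residue class `r` modulo `m` is `w r`, closed under adding
`m`. -/
def aperyIdeal (w : ZMod m → ℕ) : Set ℕ :=
  {n | w n ≤ n}

theorem IsAperyFun.apply_mem {w : ZMod m → ℕ} (hw : IsAperyFun w) (r : ZMod m) :
    w r ∈ aperyIdeal w := by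
  simp [aperyIdeal, hw.natCast_apply]

theorem add_mul_mem_of_forall_add_mem {I : Set ℕ} (hm : ∀ n ∈ I, n + m ∈ I) {n : ℕ}
    (hn : n ∈ I) (k : ℕ) : n + m * k ∈ I := by
  induction k with
  | zero => exact hn
  | succ k ih => simpa only [mul_add_one, add_assoc] using hm _ ih

theorem exists_isAperyFun_eq_aperyIdeal [NeZero m] {I : Set ℕ} (h0 : 0 ∈ I)
    (hm : ∀ n ∈ I, n + m ∈ I) (hI : Iᶜ.Finite) :
    ∃ w : ZMod m → ℕ, IsAperyFun w ∧ aperyIdeal w = I := by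
  let w (r : ZMod m) : ℕ := sInf {n ∈ I | (n : ZMod m) = r}
  have hmem (r : ZMod m) : w r ∈ I ∧ (w r : ZMod m) = r := by
    apply Nat.sInf_mem (s := {n ∈ I | (n : ZMod m) = r})
    have hinfinite : {n : ℕ | (n : ZMod m) = r}.Infinite := by
      refine Set.infinite_of_injective_forall_mem (f := fun k : ℕ => r.val + m * k) ?_ ?_
      · exact fun k l hkl => Nat.eq_of_mul_eq_mul_left (NeZero.pos m) (Nat.add_left_cancel hkl)
      · intro k; simp
    obtain ⟨n, hn, hnI⟩ := (hinfinite.sdiff hI).nonempty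
    exact ⟨n, not_not.1 hnI, hn⟩
  have hle {n : ℕ} (hn : n ∈ I) : w n ≤ n := Nat.sInf_le ⟨hn, rfl⟩
  refine ⟨w, ⟨?_, fun r => (hmem r).2⟩, Set.Subset.antisymm (fun n hn => ?_) fun n hn => hle hn⟩
  · simpa using hle h0
  · obtain ⟨k, hk⟩ := (Nat.modEq_iff_dvd' hn).1 ((ZMod.natCast_eq_natCast_iff _ _ _).1 (hmem n).2)
    rw [← Nat.add_sub_cancel' hn, hk]
    exact add_mul_mem_of_forall_add_mem hm (hmem n).1 k

theorem exists_add_aperyIdeal_eq_iff {a l : ZMod m → ℕ} (ha : IsAperyFun a) (hl : IsAperyFun l) :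
    (∃ K : Set ℕ, 0 ∈ K ∧ aperyIdeal a + K = aperyIdeal l) ↔
      l ≤ a ∧ ∀ i, ∃ j, ∀ k, l (i - j + k) + a j ≤ l i + a k := by
  constructor
  · rintro ⟨K, hK, hadd⟩
    have hmem {x z : ℕ} (hx : x ∈ aperyIdeal a) (hz : z ∈ K) : l ((x + z : ℕ) : ZMod m) ≤ x + z :=
      hadd.subset (Set.add_mem_add hx hz)
    refine ⟨fun r => by simpa [ha.natCast_apply] using hmem (ha.apply_mem r) hK, fun i => ?_⟩
    obtain ⟨x, hx, z, hz, hxz : x + z = l i⟩ := hadd.superset (hl.apply_mem i)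
    refine ⟨x, fun k => ?_⟩
    have hi : i - x + k = ((a k + z : ℕ) : ZMod m) := by
      rw [← hl.natCast_apply i, ← hxz, Nat.cast_add, Nat.cast_add, ha.natCast_apply]
      ring
    have hkz := hmem (ha.apply_mem k) hz
    rw [← hi] at hkz
    have hax : a x ≤ x := hx
    lia
  · rintro ⟨hle, hfactor⟩
    refine ⟨{z | ∀ x ∈ aperyIdeal a, x + z ∈ aperyIdeal l}, fun x hx => (hle x).trans hx,
      Set.Subset.antisymm (Set.add_subset_iff.2 fun x hx z hz => hz x hx) fun n hn => ?_⟩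
    obtain ⟨j, hj⟩ := hfactor n
    have hn' : l n ≤ n := hn
    have hjn : a j ≤ n := by
      have := hj 0
      rw [ha.map_zero] at this
      lia
    refine ⟨a j, ha.apply_mem j, n - a j, fun x hx => ?_, Nat.add_sub_cancel' hjn⟩
    have hx' : a x ≤ x := hx
    have hcast : ((x + (n - a j) : ℕ) : ZMod m) = n - j + x := by
      rw [Nat.cast_add, Nat.cast_sub hjn, ha.natCast_apply]
      ring
    have := hj x
    change l _ ≤ _
    rw [hcast]
    lia

end AperySet

theorem forall_zmod_four {p : ZMod 4 → Prop} : (∀ i, p i) ↔ p 0 ∧ p 1 ∧ p 2 ∧ p 3 := by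
  refine ⟨fun h => ⟨h 0, h 1, h 2, h 3⟩, fun ⟨h0, h1, h2, h3⟩ i => ?_⟩
  fin_cases i <;> assumption

theorem exists_zmod_four {p : ZMod 4 → Prop} : (∃ i, p i) ↔ p 0 ∨ p 1 ∨ p 2 ∨ p 3 := by
  simp only [← not_forall_not, forall_zmod_four, not_and_or, not_not]

/-- The least elements of an ideal in the residue classes of `1`, `2` and `3` modulo `4`. The
congruences themselves are recorded separately by `AperyTriple.Graded`. -/
@[ext]
structure AperyTriple where
  one : ℕ
  two : ℕ
  three : ℕ

namespace AperyTriple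

variable {a b x m : AperyTriple} {r : ℕ}

/-- The order `⪯` in Apéry coordinates. The least element of the larger ideal in each residue
class is a sum `y + z`, where `y` lies in the smaller ideal and translation by `z` maps the smaller
ideal into the larger one; the alternatives in `one`, `two` and `three` correspond to the residue
classes of `y`, with those implied by the others left out. -/
structure Precedes (a x : AperyTriple) : Prop where
  le : x.1 ≤ a.1 ∧ x.2 ≤ a.2 ∧ x.3 ≤ a.3
  one : a.1 = x.1 ∨ (x.2 ≤ a.1 + x.1 ∧ x.3 ≤ a.2 + x.1)
  two : a.2 = x.2 ∨ (x.3 ≤ a.1 + x.2 ∧ x.1 ≤ a.3 + x.2) ∨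
    (a.1 + x.1 ≤ x.2 ∧ a.1 + x.3 ≤ a.2 + x.2) ∨ (a.3 + x.3 ≤ x.2 ∧ a.3 + x.1 ≤ a.2 + x.2)
  three : a.3 = x.3 ∨ (x.2 ≤ a.3 + x.3 ∧ x.1 ≤ a.2 + x.3)

/-- `m` is the least common upper bound of `a` and `b` for `AperyTriple.Precedes`. -/
structure IsSup (a b m : AperyTriple) : Prop where
  left : a.Precedes m
  right : b.Precedes m
  least : ∀ x, a.Precedes x → b.Precedes x → m.Precedes x

/-- The Apéry coordinates of the sum of the ideals with coordinates `a` and `b`. -/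
def add (a b : AperyTriple) : AperyTriple where
  one := min (min a.1 b.1) (min (a.2 + b.3) (a.3 + b.2))
  two := min (min a.2 b.2) (min (a.1 + b.1) (a.3 + b.3))
  three := min (min a.3 b.3) (min (a.1 + b.2) (a.2 + b.1))

/-- The symmetry of Apéry coordinates induced by negation of residue classes. -/
def swap (a : AperyTriple) : AperyTriple :=
  ⟨a.3, a.2, a.1⟩

/-- The coordinates lie in the residue classes of `r`, `2 * r` and `3 * r` modulo `4`. Ideals have
`r = 1`; a general `r` makes the notion stable under `AperyTriple.swap`. -/
structure Graded (r : ℕ) (a : AperyTriple) : Prop where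
  one : a.1 % 4 = r % 4
  two : a.2 % 4 = 2 * r % 4
  three : a.3 % 4 = 3 * r % 4

theorem Precedes.swap (h : a.Precedes x) : a.swap.Precedes x.swap where
  le := ⟨h.le.2.2, h.le.2.1, h.le.1⟩
  one := h.three
  two := h.two.imp_right (Or.imp And.symm Or.symm)
  three := h.one

theorem IsSup.symm (h : IsSup a b m) : IsSup b a m :=
  ⟨h.right, h.left, fun x hb ha => h.least x ha hb⟩

theorem IsSup.swap (h : IsSup a b m) : IsSup a.swap b.swap m.swap :=
  ⟨h.left.swap, h.right.swap, fun x ha hb => (h.least x.swap ha.swap hb.swap).swap⟩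

theorem Graded.swap (h : a.Graded r) : a.swap.Graded (3 * r) := by
  obtain ⟨h1, h2, h3⟩ := h
  constructor <;> simp only [AperyTriple.swap] <;> lia

theorem Graded.of_swap (h : a.swap.Graded (3 * r)) : a.Graded r := by
  obtain ⟨h1, h2, h3⟩ := h
  simp only [AperyTriple.swap] at h1 h2 h3
  constructor <;> lia

theorem Graded.add (ha : a.Graded r) (hb : b.Graded r) : (a.add b).Graded r := by
  obtain ⟨ha1, ha2, ha3⟩ := ha
  obtain ⟨hb1, hb2, hb3⟩ := hb
  constructor <;> simp only [AperyTriple.add] <;> lia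

protected theorem add_comm (a b : AperyTriple) : a.add b = b.add a := by
  ext <;> simp only [add] <;> lia

theorem swap_add (a b : AperyTriple) : (a.add b).swap = a.swap.add b.swap := by
  ext <;> simp only [add, swap] <;> lia

/-- The configurations, up to exchanging `a` and `b` and up to `AperyTriple.swap`, in which
`a.add b` may fail to be the supremum of `a` and `b`. -/
def Exceptional (a b : AperyTriple) : Prop :=
  (a.1 = b.1 ∧ (a.1 + b.1 ≤ a.2 ∨ a.2 = b.2 ∧ a.1 + b.2 ≤ min a.3 b.3)) ∨
    (a.1 < b.1 ∧ a.1 + b.1 = a.2 ∧ a.2 ≤ min a.3 b.3)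

section NonExceptional

theorem precedes_add_left (a b : AperyTriple) : a.Precedes (a.add b) := by
  constructor <;> simp only [add] <;> omega

theorem Precedes.two_le_one_add_one (ha : a.Precedes x) (hb : b.Precedes x)
    (hab : ¬ Exceptional a b) : x.2 ≤ a.1 + b.1 := by
  by_contra! hx
  have hale := ha.le
  have hble := hb.le
  have ha1 : a.1 = x.1 := ha.one.resolve_right (by omega)
  have hb1 : b.1 = x.1 := hb.one.resolve_right (by omega)
  exact hab (Or.inl ⟨ha1.trans hb1.symm, Or.inl (by omega)⟩)

theorem Precedes.three_le_add (ha : a.Precedes x) (hb : b.Precedes x) (h2 : a.2 ≤ b.2)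
    (hab : ¬ Exceptional a b) : x.3 ≤ (a.add b).3 := by
  have hx2 := ha.two_le_one_add_one hb hab
  obtain ⟨hale, ha1, ha2, -⟩ := ha
  obtain ⟨hble, hb1, hb2, -⟩ := hb
  by_contra! hx
  refine hab ?_
  have hx3 : a.1 + b.2 < x.3 ∨ a.2 + b.1 < x.3 := by
    simp only [AperyTriple.add] at hx
    clear ha1 ha2 hb1 hb2
    omega
  replace ha1 : a.1 = x.1 := ha1.resolve_right (by clear ha2 hb1 hb2; omega)
  by_cases htie : b.1 = x.1
  · refine Or.inl ⟨ha1.trans htie.symm, or_iff_not_imp_left.2 fun h12 => ?_⟩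
    replace ha2 : a.2 = x.2 := ha2.resolve_right (by omega)
    replace hb2 : b.2 = x.2 := hb2.resolve_right (by omega)
    omega
  · replace hb1 := hb1.resolve_left htie
    replace ha2 : a.2 = x.2 := ha2.resolve_right (by omega)
    have h12 : b.1 + x.1 ≤ x.2 := by omega
    exact Or.inr (by omega)

theorem Precedes.three_le_one_add_one_add (ha : a.Precedes x) (hb : b.Precedes x)
    (hab : ¬ Exceptional a b) (ha1 : a.1 ≠ x.1) (hb1 : b.1 ≠ x.1) :
    x.3 ≤ a.1 + b.1 + x.1 := by
  have hone : ¬ (a.1 = b.1 ∧ a.1 + b.1 ≤ a.2) := fun h => hab (Or.inl ⟨h.1, Or.inl h.2⟩)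
  obtain ⟨hale, hax1, hax2, -⟩ := ha
  obtain ⟨hble, hbx1, hbx2, -⟩ := hb
  replace hax1 := hax1.resolve_left ha1
  replace hbx1 := hbx1.resolve_left hb1
  omega

theorem Precedes.add_one (ha : a.Precedes x) (hb : b.Precedes x) (hab : ¬ Exceptional a b)
    (hle : x.1 ≤ (a.add b).1) :
    (a.add b).1 = x.1 ∨ (x.2 ≤ (a.add b).1 + x.1 ∧ x.3 ≤ (a.add b).2 + x.1) := by
  refine or_iff_not_imp_left.2 fun hne => ?_
  have hale := ha.le
  have hble := hb.le
  simp only [AperyTriple.add] at hle hne ⊢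
  have ha1 : a.1 ≠ x.1 := by omega
  have hb1 : b.1 ≠ x.1 := by omega
  have hx3 := ha.three_le_one_add_one_add hb hab ha1 hb1
  obtain ⟨ha12, ha13⟩ := ha.one.resolve_left ha1
  obtain ⟨hb12, hb13⟩ := hb.one.resolve_left hb1
  constructor <;> omega

theorem Precedes.add_two (ha : a.Precedes x) (hb : b.Precedes x) (h2 : a.2 ≤ b.2)
    (hab : ¬ Exceptional a b) (hle : x.2 ≤ (a.add b).2) :
    (a.add b).2 = x.2 ∨ x.3 ≤ (a.add b).1 + x.2 ∨
      ((a.add b).1 + x.1 ≤ x.2 ∧ (a.add b).1 + x.3 ≤ (a.add b).2 + x.2) := by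
  have hone : ¬ (a.1 = b.1 ∧ a.1 + b.1 ≤ a.2) := fun h => hab (Or.inl ⟨h.1, Or.inl h.2⟩)
  refine or_iff_not_imp_left.2 fun hne => or_iff_not_imp_left.2 fun hlt => ?_
  obtain ⟨hale, ha1, ha2, -⟩ := ha
  obtain ⟨hble, hb1, hb2, -⟩ := hb
  simp only [AperyTriple.add] at hle hne hlt ⊢
  replace ha2 := ha2.resolve_left (by clear ha1 hb1 hb2; omega)
  replace hb2 := hb2.resolve_left (by clear ha1 hb1 ha2; omega)
  have hx3 : a.1 + x.2 < x.3 ∨ b.1 + x.2 < x.3 := by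
    clear ha1 hb1 ha2 hb2
    omega
  omega

theorem Precedes.add (ha : a.Precedes x) (hb : b.Precedes x) (h2 : a.2 ≤ b.2)
    (hab : ¬ Exceptional a b) (hab' : ¬ Exceptional a.swap b.swap) : (a.add b).Precedes x := by
  have hone_le : x.1 ≤ (a.add b).1 := by
    have := ha.swap.three_le_add hb.swap h2 hab'
    rwa [← swap_add] at this
  have htwo_le : x.2 ≤ (a.add b).2 :=
    le_min (le_min ha.le.2.1 hb.le.2.1)
      (le_min (ha.two_le_one_add_one hb hab) (ha.swap.two_le_one_add_one hb.swap hab'))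
  have hthree_le : x.3 ≤ (a.add b).3 := ha.three_le_add hb h2 hab
  have htwo := ha.add_two hb h2 hab htwo_le
  have htwo_swap := ha.swap.add_two hb.swap h2 hab' (swap_add a b ▸ htwo_le)
  have hthree := ha.swap.add_one hb.swap hab' (swap_add a b ▸ hthree_le)
  rw [← swap_add] at htwo_swap hthree
  dsimp only [AperyTriple.swap] at htwo_swap
  exact ⟨⟨hone_le, htwo_le, hthree_le⟩, ha.add_one hb hab hone_le, by tauto, hthree⟩

theorem isSup_add (h2 : a.2 ≤ b.2) (hab : ¬ Exceptional a b)
    (hab' : ¬ Exceptional a.swap b.swap) : IsSup a b (a.add b) :=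
  ⟨precedes_add_left a b, AperyTriple.add_comm b a ▸ precedes_add_left b a,
    fun _ ha hb => ha.add hb h2 hab hab'⟩

end NonExceptional

section Exceptional

theorem isSup_of_one_eq_of_two_eq (h1 : a.1 = b.1) (h2 : a.2 = b.2)
    (h3 : a.3 = b.3 ∨ a.2 ≤ a.3 + b.3 ∧ a.1 ≤ a.2 + min a.3 b.3) :
    IsSup a b ⟨a.1, a.2, min a.3 b.3⟩ := by
  refine ⟨by constructor <;> dsimp only <;> omega, by constructor <;> dsimp only <;> omega, ?_⟩
  rintro x ⟨hax, hax1, hax2, hax3⟩ ⟨hbx, hbx1, hbx2, hbx3⟩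
  constructor <;> dsimp only <;> omega

theorem isSup_of_one_eq_of_two_lt (h1 : a.1 = b.1) (h12 : a.1 + b.1 ≤ a.2) (h2 : a.2 < b.2)
    (h3 : a.3 = b.3 ∨ a.2 ≤ a.3 + b.3) :
    IsSup a b ⟨a.1, a.2, min (min a.3 b.3) (a.2 + b.2 - b.1)⟩ := by
  refine ⟨by constructor <;> dsimp only <;> omega, by constructor <;> dsimp only <;> omega, ?_⟩
  rintro x ⟨hax, hax1, hax2, hax3⟩ ⟨hbx, hbx1, hbx2, hbx3⟩
  -- The extremal case is the third alternative of `hbx2`.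
  have hx3 : x.3 ≤ a.2 + b.2 - b.1 := by omega
  constructor <;> dsimp only <;> omega

theorem isSup_of_one_eq_of_three_add_three_lt (h1 : a.1 = b.1) (h12 : a.1 + b.1 ≤ a.2)
    (h2 : a.2 ≤ b.2) (h3 : a.3 ≠ b.3) (h32 : a.3 + b.3 < a.2) :
    IsSup a b ⟨a.1, a.3 + b.3, min a.3 b.3⟩ := by
  refine ⟨by constructor <;> dsimp only <;> omega, by constructor <;> dsimp only <;> omega, ?_⟩
  rintro x ⟨hax, hax1, hax2, hax3⟩ ⟨hbx, hbx1, hbx2, hbx3⟩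
  -- As `a.3 ≠ b.3`, one of `hax3`, `hbx3` is in its second alternative.
  have hx2 : x.2 ≤ a.3 + b.3 := by omega
  constructor <;> dsimp only <;> omega

theorem isSup_of_one_lt (h1 : a.1 < b.1) (h12 : a.1 + b.1 = a.2) (h2 : a.2 ≤ b.2)
    (h3 : a.2 ≤ min a.3 b.3) : IsSup a b ⟨a.1, a.2, min (min a.3 b.3) (a.1 + b.2)⟩ := by
  refine ⟨by constructor <;> dsimp only <;> omega, by constructor <;> dsimp only <;> omega, ?_⟩
  rintro x ⟨hax, hax1, hax2, hax3⟩ ⟨hbx, hbx1, hbx2, hbx3⟩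
  have hx3 : x.3 ≤ a.1 + b.2 := by
    have hb2 : x.3 ≤ b.2 + x.1 := (hbx1.resolve_left (by omega)).2
    omega
  constructor <;> dsimp only <;> omega

theorem exists_isSup_of_one_eq (ha : a.Graded r) (hb : b.Graded r) (h2 : a.2 ≤ b.2)
    (h1 : a.1 = b.1) (h12 : a.1 + b.1 ≤ a.2) : ∃ m : AperyTriple, m.Graded r ∧ IsSup a b m := by
  obtain ⟨ha1, ha2, ha3⟩ := ha
  obtain ⟨hb1, hb2, hb3⟩ := hb
  by_cases h3 : a.3 = b.3 ∨ a.2 ≤ a.3 + b.3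
  · rcases h2.eq_or_lt with h2 | h2
    · refine ⟨_, ?_, isSup_of_one_eq_of_two_eq h1 h2 (by omega)⟩
      constructor <;> dsimp only <;> omega
    · refine ⟨_, ?_, isSup_of_one_eq_of_two_lt h1 h12 h2 h3⟩
      constructor <;> dsimp only <;> omega
  · push Not at h3
    refine ⟨_, ?_, isSup_of_one_eq_of_three_add_three_lt h1 h12 h2 h3.1 h3.2⟩
    constructor <;> dsimp only <;> omega

theorem Exceptional.exists_isSup (hab : Exceptional a b) (ha : a.Graded r) (hb : b.Graded r)
    (h2 : a.2 ≤ b.2) : ∃ m : AperyTriple, m.Graded r ∧ IsSup a b m := by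
  rcases hab with ⟨h1, h12 | ⟨h2, h3⟩⟩ | ⟨h1, h12, h3⟩
  · exact exists_isSup_of_one_eq ha hb h2 h1 h12
  all_goals
    obtain ⟨ha1, ha2, ha3⟩ := ha
    obtain ⟨hb1, hb2, hb3⟩ := hb
  · refine ⟨_, ?_, isSup_of_one_eq_of_two_eq h1 h2 (by omega)⟩
    constructor <;> dsimp only <;> omega
  · refine ⟨_, ?_, isSup_of_one_lt h1 h12 h2 h3⟩
    constructor <;> dsimp only <;> omega

end Exceptional

theorem exists_isSup (ha : a.Graded r) (hb : b.Graded r) :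
    ∃ m : AperyTriple, m.Graded r ∧ IsSup a b m := by
  wlog h2 : a.2 ≤ b.2 generalizing a b
  · obtain ⟨m, hm, hsup⟩ := this hb ha (le_of_not_ge h2)
    exact ⟨m, hm, hsup.symm⟩
  by_cases hab : Exceptional a b
  · exact hab.exists_isSup ha hb h2
  by_cases hab' : Exceptional a.swap b.swap
  · obtain ⟨m, hm, hsup⟩ := hab'.exists_isSup ha.swap hb.swap h2
    exact ⟨m.swap, Graded.of_swap hm, hsup.swap⟩
  · exact ⟨a.add b, ha.add hb, isSup_add h2 hab hab'⟩

/-- The Apéry coordinates as a function of the residue class, with value `0` at the class of `0`. -/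
def toFun (a : AperyTriple) : ZMod 4 → ℕ :=
  ![0, a.1, a.2, a.3]

theorem toFun_zero (a : AperyTriple) : a.toFun 0 = 0 := rfl

theorem toFun_one (a : AperyTriple) : a.toFun 1 = a.1 := rfl

theorem toFun_two (a : AperyTriple) : a.toFun 2 = a.2 := rfl

theorem toFun_three (a : AperyTriple) : a.toFun 3 = a.3 := rfl

theorem Graded.isAperyFun_toFun (ha : a.Graded 1) : IsAperyFun a.toFun where
  map_zero := a.toFun_zero
  natCast_apply := by
    obtain ⟨ha1, ha2, ha3⟩ := ha
    simp only [forall_zmod_four, toFun_zero, toFun_one, toFun_two, toFun_three]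
    exact ⟨rfl, ZMod.val_injective 4 ha1, ZMod.val_injective 4 ha2,
      ZMod.val_injective 4 ha3⟩

theorem exists_graded_toFun_eq {w : ZMod 4 → ℕ} (hw : IsAperyFun w) :
    ∃ a : AperyTriple, a.Graded 1 ∧ a.toFun = w := by
  have hmod (r : ZMod 4) : w r % 4 = r.val := by
    rw [← ZMod.val_natCast, hw.natCast_apply]
  refine ⟨⟨w 1, w 2, w 3⟩, ⟨hmod 1, hmod 2, hmod 3⟩, funext ?_⟩
  exact forall_zmod_four.2 ⟨hw.map_zero.symm, rfl, rfl, rfl⟩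

theorem precedes_iff_toFun : a.Precedes x ↔ x.toFun ≤ a.toFun ∧
    ∀ i, ∃ j, ∀ k, x.toFun (i - j + k) + a.toFun j ≤ x.toFun i + a.toFun k := by
  simp only [Pi.le_def, forall_zmod_four, exists_zmod_four]
  reduce_mod_char
  simp only [toFun_zero, toFun_one, toFun_two, toFun_three]
  constructor
  · rintro ⟨hle, hone, htwo, hthree⟩
    omega
  · rintro ⟨⟨-, hle⟩, -, hone, htwo, hthree⟩
    constructor <;> omega

end AperyTriple

section NILattice

variable {S : Set ℕ}

theorem exists_graded_aperyIdeal_eq {I : Set ℕ} (hS : IsNumericalSemigroup S) (h4 : 4 ∈ S)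
    (hI : IsNormalizedIdeal S I) : ∃ a : AperyTriple, a.Graded 1 ∧ aperyIdeal a.toFun = I := by
  obtain ⟨w, hw, rfl⟩ := exists_isAperyFun_eq_aperyIdeal hI.1 (fun n hn => hI.2 n hn 4 h4)
    (hS.2.2.subset (Set.compl_subset_compl.2 hI.subset))
  obtain ⟨a, ha, rfl⟩ := AperyTriple.exists_graded_toFun_eq hw
  exact ⟨a, ha, rfl⟩

theorem preceq_aperyIdeal_toFun_iff {a x : AperyTriple} (hS : IsNumericalSemigroup S)
    (haS : IsNormalizedIdeal S (aperyIdeal a.toFun)) (ha : a.Graded 1) (hx : x.Graded 1) :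
    Preceq S (aperyIdeal a.toFun) (aperyIdeal x.toFun) ↔ a.Precedes x := by
  rw [preceq_iff_exists_zero_mem hS haS,
    exists_add_aperyIdeal_eq_iff ha.isAperyFun_toFun hx.isAperyFun_toFun,
    AperyTriple.precedes_iff_toFun]

theorem exists_isSupNI {I J : Set ℕ} (hS : IsNumericalSemigroup S) (h4 : 4 ∈ S)
    (hI : IsNormalizedIdeal S I) (hJ : IsNormalizedIdeal S J) : ∃ M, IsSupNI S I J M := by
  obtain ⟨a, ha, rfl⟩ := exists_graded_aperyIdeal_eq hS h4 hI
  obtain ⟨b, hb, rfl⟩ := exists_graded_aperyIdeal_eq hS h4 hJ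
  obtain ⟨m, hm, hsup⟩ := AperyTriple.exists_isSup ha hb
  have haM := (preceq_aperyIdeal_toFun_iff hS hI ha hm).2 hsup.left
  have hbM := (preceq_aperyIdeal_toFun_iff hS hJ hb hm).2 hsup.right
  have hM : IsNormalizedIdeal S (aperyIdeal m.toFun) := haM.isNormalizedIdeal hI
  refine ⟨aperyIdeal m.toFun, hM, haM, hbM, fun L hL haL hbL => ?_⟩
  obtain ⟨x, hx, rfl⟩ := exists_graded_aperyIdeal_eq hS h4 hL
  exact (preceq_aperyIdeal_toFun_iff hS hM hm hx).2 <| hsup.least x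
    ((preceq_aperyIdeal_toFun_iff hS hI ha hx).1 haL)
    ((preceq_aperyIdeal_toFun_iff hS hJ hb hx).1 hbL)

end NILattice

theorem NILattice_of_mult_four_general (S : Set ℕ) (hS : IsNumericalSemigroup S) (h4 : 4 ∈ S) :
    NILattice S := by
  have hsup : ∀ I ∈ NI S, ∀ J ∈ NI S, ∃ M, IsSupNI S I J M :=
    fun _ hI _ hJ => exists_isSupNI hS h4 hI hJ
  exact fun I J hI hJ => ⟨hsup I hI J hJ, exists_isInfNI hS hsup hI hJ⟩

/-- Corollary: if `S` has multiplicity four, then `(𝔑(S), ⪯)` is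
a lattice. -/
theorem NILattice_of_mult_four (S : Set ℕ) (hS : IsNumericalSemigroup S)
    (hm : multNS S = 4) : NILattice S := by
  have h4 : multNS S ∈ S := multNS_mem (by lia)
  exact NILattice_of_mult_four_general S hS (hm ▸ h4)
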